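/- For any real numbers c₁ < c₂ there exists a C^∞ function τ : ℝ → ℝ which is monotone increasing and convex on all of ℝ, satisfies τ(t) = 0 for every t ≤ 1/(c₂ − c₁) and τ(t) > 0 for every t > 1/(c₂ − c₁), and for which the integral ∫₀^{+∞} √(τ''(t)) dt diverges to +∞. -/

import Mathlib

open MeasureTheory

theorem hasDerivAt_integral_of_continuous {g : ℝ → ℝ} (hg : Continuous g) (a t : ℝ) :
    HasDerivAt (fun x => ∫ s in a..x, g s) (g t) t :=
  intervalIntegral.integral_hasDerivAt_right (hg.intervalIntegrable _ _)
    hg.stronglyMeasurable.stronglyMeasurableAtFilter hg.continuousAt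

theorem deriv_integral_of_continuous {g : ℝ → ℝ} (hg : Continuous g) (a : ℝ) :
    deriv (fun x => ∫ s in a..x, g s) = g :=
  funext fun t => (hasDerivAt_integral_of_continuous hg a t).deriv

theorem contDiff_integral_of_contDiff {g : ℝ → ℝ} (hg : ContDiff ℝ (⊤ : ℕ∞) g) (a : ℝ) :
    ContDiff ℝ (⊤ : ℕ∞) (fun x => ∫ s in a..x, g s) := by
  rw [contDiff_infty_iff_deriv, deriv_integral_of_continuous hg.continuous]
  exact ⟨fun t => (hasDerivAt_integral_of_continuous hg.continuous a t).differentiableAt, hg⟩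

theorem integral_eq_zero_of_le {g : ℝ → ℝ} {a t : ℝ} (hg : ∀ s ≤ a, g s = 0) (ht : t ≤ a) :
    ∫ s in a..t, g s = 0 := by
  refine intervalIntegral.integral_zero_ae (.of_forall fun s hs => hg s ?_)
  rw [Set.uIoc_of_ge ht] at hs
  exact hs.2

theorem integral_pos_of_lt {g : ℝ → ℝ} {a t : ℝ} (hc : Continuous g) (hg : ∀ s, a < s → 0 < g s)
    (ht : a < t) : 0 < ∫ s in a..t, g s :=
  intervalIntegral.intervalIntegral_pos_of_pos_on (hc.intervalIntegrable _ _)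
    (fun s hs => hg s hs.1) ht

theorem lintegral_Ioi_eq_top_of_monotone {f : ℝ → ENNReal} (hf : Monotone f) {b : ℝ}
    (hb : f b ≠ 0) (a : ℝ) : ∫⁻ t in Set.Ioi a, f t = ⊤ := by
  rw [eq_top_iff]
  calc ⊤ = ∫⁻ _ in Set.Ioi (max a b), f b := by
        simp [Real.volume_Ioi, ENNReal.mul_top hb]
    _ ≤ ∫⁻ t in Set.Ioi (max a b), f t :=
        setLIntegral_mono' measurableSet_Ioi fun t ht =>
          hf ((le_max_right a b).trans (Set.mem_Ioi.1 ht).le)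
    _ ≤ ∫⁻ t in Set.Ioi a, f t :=
        lintegral_mono_set (Set.Ioi_subset_Ioi (le_max_left a b))

/-- Construction 4.1 of the paper: for any reals `c₁ < c₂` there is a smooth,
monotone increasing, convex function `τ : ℝ → ℝ` vanishing exactly on
`(-∞, 1/(c₂ - c₁)]`, positive to the right of that point, and such that
`∫₀^∞ √(τ''(t)) dt = +∞`. -/
theorem stmt_0 (c₁ c₂ : ℝ) (h : c₁ < c₂) :
    ∃ τ : ℝ → ℝ,
      ContDiff ℝ (⊤ : ℕ∞) τ ∧
      Monotone τ ∧
      ConvexOn ℝ Set.univ τ ∧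
      (∀ t : ℝ, t ≤ 1 / (c₂ - c₁) → τ t = 0) ∧
      (∀ t : ℝ, 1 / (c₂ - c₁) < t → 0 < τ t) ∧
      (∫⁻ t in Set.Ioi (0 : ℝ),
          ENNReal.ofReal (Real.sqrt (deriv (deriv τ) t)) = ⊤) := by
  set a := 1 / (c₂ - c₁)
  let g : ℝ → ℝ := fun t => expNegInvGlue (t - a)
  let F : ℝ → ℝ := fun t => ∫ s in a..t, g s
  have hg : ContDiff ℝ (⊤ : ℕ∞) g :=
    expNegInvGlue.contDiff.comp (contDiff_id.sub contDiff_const)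
  have hg_zero : ∀ s ≤ a, g s = 0 := fun s hs =>
    expNegInvGlue.zero_of_nonpos (sub_nonpos.2 hs)
  have hg_pos : ∀ s, a < s → 0 < g s := fun s hs => expNegInvGlue.pos_of_pos (sub_pos.2 hs)
  have hg_mono : Monotone g := fun x y hxy =>
    expNegInvGlue.monotone (sub_le_sub_right hxy a)
  have hF : ContDiff ℝ (⊤ : ℕ∞) F := contDiff_integral_of_contDiff hg a
  have hF_zero : ∀ s ≤ a, F s = 0 := fun s hs => integral_eq_zero_of_le hg_zero hs
  have hF_pos : ∀ s, a < s → 0 < F s := fun s hs => integral_pos_of_lt hg.continuous hg_pos hs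
  have hF_nonneg : ∀ s, 0 ≤ F s := fun s =>
    (le_or_gt s a).elim (fun hs => (hF_zero s hs).ge) fun hs => (hF_pos s hs).le
  have hF_deriv : deriv F = g := deriv_integral_of_continuous hg.continuous a
  have hF_mono : Monotone F :=
    monotone_of_deriv_nonneg (hF.differentiable (by simp)) fun t => by
      rw [hF_deriv]
      exact expNegInvGlue.nonneg _
  have hτ := contDiff_integral_of_contDiff hF a
  have hτ_deriv := deriv_integral_of_continuous hF.continuous a
  have hτ_diff := hτ.differentiable (by simp)
  refine ⟨fun t => ∫ s in a..t, F s, hτ, ?_, ?_, fun t => integral_eq_zero_of_le hF_zero,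
    fun t => integral_pos_of_lt hF.continuous hF_pos, ?_⟩
  · exact monotone_of_deriv_nonneg hτ_diff fun t => by
      rw [hτ_deriv]
      exact hF_nonneg t
  · refine Monotone.convexOn_univ_of_deriv hτ_diff ?_
    rwa [hτ_deriv]
  · rw [hτ_deriv, hF_deriv]
    refine lintegral_Ioi_eq_top_of_monotone (b := a + 1)
      (fun x y hxy => ENNReal.ofReal_le_ofReal (Real.sqrt_le_sqrt (hg_mono hxy))) ?_ 0
    simpa using hg_pos (a + 1) (lt_add_one a)
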